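/- Let ξ_1, ξ_2, … be i.i.d. random elements of a measurable space X and f: X^n → ℝ a symmetric Borel function. Suppose T ⊂ ℝ and z_N: T → ℝ is a sequence of transformations such that for each t ∈ T: (i) lim_{N→∞} λ_{N,z_N(t)} = λ_t > 0, and (ii) lim_{N→∞} N^{2n−1}·p_{N,z_N(t)}·τ_{N,z_N(t)}(n−1) = 0. Then lim_{N→∞} P[H_N ≤ z_N(t)] = e^{−λ_t} for all t ∈ T. -/

import Mathlib

/-!
The number of exceedances `W = ∑ X_a`, with `a` ranging over the increasing `n`-tuples of indices
and `X_a` the indicator of `f(ξ_a) > z`, is approximately Poisson with mean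
`λ_N = C(N, n) * p_N`, and `H_N ≤ z` means `W = 0`.

The Poisson approximation (`void_approx`) comes from the generating function
`φ(s) = E (1 - s)^W = E ∏ (1 - s X_a)`. Deleting from the product the neighbours of `a`, the
tuples sharing an index with `a`, makes the rest independent of `X_a`. Hence
`|φ' + λ_N φ| ≤ ε` on `[0, 1]`, where
`ε = ∑_a ∑_{b ~ a, b ≠ a} E X_a X_b + ∑_a ∑_{b ~ a} p_N ^ 2`, and integrating `e^{λ_N s} φ(s)`
gives `|φ(1) - e^{-λ_N}| ≤ ε`.

It remains to see that `ε → 0`. Let `g` be the conditional exceedance probability given `n - 1`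
coordinates (`condProb`), and `Q = E g ^ 2`, which equals `p_N * τ_N(n - 1)`
(`tauProb_mul_pProb`). For distinct `a` and `b`, each has an index the other lacks. Integrating
these two coordinates out first shows that `E X_a X_b` is the expectation of a product of
two copies of `g` (`measure_exceed_pair`), so it is at most `2 * Q` by `x y ≤ x ^ 2 + y ^ 2`,
however many indices are shared. Likewise `p_N ^ 2 ≤ 2 * Q`. There are `O(N ^ (2 n - 1))`
neighbouring pairs (`card_nbr_le`), so `ε = O(N ^ (2 n - 1) * p_N * τ_N(n - 1))`
(`maxCDF_error`).
-/

open MeasureTheory Real Filter Topology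

noncomputable section

variable {X : Type*} [MeasurableSpace X]

/-- `p_{N,z} = P[f(ξ_1,…,ξ_n) > z]` for i.i.d. `ξ_i ∼ μ`. -/
def pProb (μ : Measure X) (n : ℕ) (f : (Fin n → X) → ℝ) (z : ℝ) : ℝ :=
  ((Measure.pi fun _ : Fin n => μ) {u : Fin n → X | z < f u}).toReal

/-- `τ_{N,z}(r) = P[f(ξ_1,…,ξ_n) > z, f(ξ_{1+n−r},…,ξ_{2n−r}) > z] / p_{N,z}`:
the two `n`-tuples share exactly `r` coordinates. -/
def tauProb (μ : Measure X) (n : ℕ) (f : (Fin n → X) → ℝ) (z : ℝ) (r : ℕ) : ℝ :=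
  ((Measure.pi fun _ : Fin (2 * n) => μ)
      {u : Fin (2 * n) → X |
        z < f (fun i : Fin n => u ⟨(i : ℕ), by have := i.2; omega⟩) ∧
        z < f (fun i : Fin n => u ⟨n - r + (i : ℕ), by have := i.2; omega⟩)}).toReal /
    pProb μ n f z

/-- `P[H_N ≤ z]` where `H_N = max_{1≤i_1<…<i_n≤N} f(ξ_{i_1},…,ξ_{i_n})`. -/
def maxCDF (μ : Measure X) (n : ℕ) (f : (Fin n → X) → ℝ) (N : ℕ) (z : ℝ) : ℝ :=
  ((Measure.pi fun _ : Fin N => μ)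
      {ξ : Fin N → X | ∀ ι : Fin n → Fin N, StrictMono ι → f (ξ ∘ ι) ≤ z}).toReal

/-! ### A Poisson bound for void probabilities -/

lemma prod_one_sub_bounds {I : Type*} (A : Finset I) (y x : I → ℝ) (h0 : ∀ b, 0 ≤ y b)
    (h1 : ∀ b, y b ≤ 1) (hyx : ∀ b, y b ≤ x b) :
    0 ≤ ∏ b ∈ A, (1 - y b) ∧ ∏ b ∈ A, (1 - y b) ≤ 1 ∧
      1 - ∏ b ∈ A, (1 - y b) ≤ ∑ b ∈ A, x b := by
  classical
  induction A using Finset.induction_on with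
  | empty => simp
  | insert a A ha ih =>
    obtain ⟨i0, i1, i2⟩ := ih
    rw [Finset.prod_insert ha, Finset.sum_insert ha]
    have := h0 a; have := h1 a; have := hyx a
    refine ⟨mul_nonneg (by linarith) i0, by nlinarith, ?_⟩
    nlinarith

/-- Poisson approximation of the void probability of a dissociated family of `{0,1}`-valued
variables: the generating function `φ(s) = E ∏ (1 - s X_a)` almost solves `φ' = -λ φ` on
`[0, 1]`, and `φ(1)` is the probability that all `X_a` vanish. -/
lemma void_approx {Ω : Type*} [MeasurableSpace Ω] (P : Measure Ω) [IsProbabilityMeasure P]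
    {I : Type*} [Fintype I] [DecidableEq I] (X : I → Ω → ℝ) (hXm : ∀ a, Measurable (X a))
    (h01 : ∀ a ω, X a ω = 0 ∨ X a ω = 1) (nb : I → Finset I) (hself : ∀ a, a ∈ nb a)
    (hind : ∀ (a : I) (s : ℝ), ∫ ω, X a ω * ∏ b ∈ (nb a)ᶜ, (1 - s * X b ω) ∂P =
      (∫ ω, X a ω ∂P) * ∫ ω, ∏ b ∈ (nb a)ᶜ, (1 - s * X b ω) ∂P) :
    |(∫ ω, ∏ a, (1 - X a ω) ∂P) - Real.exp (-∑ a, ∫ ω, X a ω ∂P)| ≤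
      ∑ a, ((∑ b ∈ (nb a).erase a, ∫ ω, X a ω * X b ω ∂P) +
        (∫ ω, X a ω ∂P) * ∑ b ∈ nb a, ∫ ω, X b ω ∂P) := by
  have hX0 : ∀ a ω, 0 ≤ X a ω := fun a ω => by rcases h01 a ω with h | h <;> simp [h]
  have hX1 : ∀ a ω, X a ω ≤ 1 := fun a ω => by rcases h01 a ω with h | h <;> simp [h]
  have bddInt : ∀ (g : Ω → ℝ) (C : ℝ), Measurable g → (∀ ω, |g ω| ≤ C) → Integrable g P :=
    fun g C hg hC => Integrable.of_bound hg.aestronglyMeasurable C (ae_of_all _ hC)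
  set lam := ∑ a, ∫ ω, X a ω ∂P with hlam
  set ε := ∑ a, ((∑ b ∈ (nb a).erase a, ∫ ω, X a ω * X b ω ∂P) +
        (∫ ω, X a ω ∂P) * ∑ b ∈ nb a, ∫ ω, X b ω ∂P) with hε
  have hXint : ∀ a, Integrable (X a) P := fun a => bddInt _ 1 (hXm a) fun ω => by
    rw [abs_of_nonneg (hX0 a ω)]; exact hX1 a ω
  have hXXint : ∀ a b, Integrable (fun ω => X a ω * X b ω) P := fun a b =>
    bddInt _ 1 ((hXm a).mul (hXm b)) fun ω => by
      rw [abs_of_nonneg (mul_nonneg (hX0 a ω) (hX0 b ω))]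
      exact mul_le_one₀ (hX1 a ω) (hX0 b ω) (hX1 b ω)
  have hp0 : ∀ a, 0 ≤ ∫ ω, X a ω ∂P := fun a => integral_nonneg (hX0 a)
  have hlam0 : 0 ≤ lam := Finset.sum_nonneg fun a _ => hp0 a
  have hpm : ∀ (A : Finset I) (s : ℝ), Measurable fun ω => ∏ b ∈ A, (1 - s * X b ω) :=
    fun A s => Finset.measurable_fun_prod _ fun b _ => measurable_const.sub ((hXm b).const_mul s)
  have hpb : ∀ (A : Finset I) (s : ℝ), |s| ≤ 2 → ∀ ω, |∏ b ∈ A, (1 - s * X b ω)| ≤ 3 ^ A.card := by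
    intro A s hs ω
    rw [Finset.abs_prod]
    refine (Finset.prod_le_prod (fun _ _ => abs_nonneg _) (g := fun _ => (3 : ℝ)) ?_).trans
      (by simp)
    intro b _
    rw [abs_le] at hs ⊢
    rcases h01 b ω with h | h <;> rw [h] <;> constructor <;> linarith
  have hpint : ∀ (A : Finset I) (s : ℝ), |s| ≤ 2 →
      Integrable (fun ω => ∏ b ∈ A, (1 - s * X b ω)) P := fun A s hs =>
    bddInt _ _ (hpm A s) (hpb A s hs)
  have hXpint : ∀ (a : I) (A : Finset I) (s : ℝ), |s| ≤ 2 →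
      Integrable (fun ω => X a ω * ∏ b ∈ A, (1 - s * X b ω)) P := fun a A s hs =>
    bddInt _ (3 ^ A.card) ((hXm a).mul (hpm A s)) fun ω => by
      rw [abs_mul, abs_of_nonneg (hX0 a ω)]
      exact (mul_le_of_le_one_left (abs_nonneg _) (hX1 a ω)).trans (hpb A s hs ω)
  set φ : ℝ → ℝ := fun s => ∫ ω, ∏ a, (1 - s * X a ω) ∂P with hφ
  set D : ℝ → ℝ := fun s => -∑ a, ∫ ω, X a ω * ∏ b ∈ Finset.univ.erase a, (1 - s * X b ω) ∂P
    with hD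
  have hderiv : ∀ s, |s| ≤ 1 → HasDerivAt φ (D s) s := by
    intro s hs
    have hs' := abs_le.1 hs
    have h2 : ∀ x ∈ Metric.ball s 1, |x| ≤ 2 := fun x hx => by
      rw [Metric.mem_ball, Real.dist_eq, abs_lt] at hx
      rw [abs_le]; constructor <;> linarith
    have key := hasDerivAt_integral_of_dominated_loc_of_deriv_le (μ := P)
      (F := fun s ω => ∏ a, (1 - s * X a ω))
      (F' := fun s ω => ∑ a, -(X a ω * ∏ b ∈ Finset.univ.erase a, (1 - s * X b ω)))
      (bound := fun _ => ∑ a : I, (3 : ℝ) ^ (Finset.univ.erase a).card) (x₀ := s)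
      (Metric.ball_mem_nhds s one_pos)
      (Eventually.of_forall fun x => (hpm _ x).aestronglyMeasurable)
      (hpint _ _ (by linarith))
      (Finset.measurable_fun_sum _ fun a _ =>
        ((hXm a).mul (hpm _ s)).neg).aestronglyMeasurable
      (ae_of_all _ fun ω x hx => ?_) (integrable_const _)
      (ae_of_all _ fun ω x hx => ?_)
    · refine key.2.congr_deriv ?_
      simp only [hD, Finset.sum_neg_distrib, integral_neg]
      rw [integral_finsetSum _ fun a _ => hXpint a _ s (by linarith)]
    · refine (norm_sum_le _ _).trans (Finset.sum_le_sum fun a _ => ?_)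
      rw [norm_neg, Real.norm_eq_abs, abs_mul, abs_of_nonneg (hX0 a ω)]
      exact (mul_le_of_le_one_left (abs_nonneg _) (hX1 a ω)).trans (hpb _ x (h2 x hx) ω)
    · have := HasDerivAt.fun_finsetProd (u := (Finset.univ : Finset I))
        (f := fun a x => 1 - x * X a ω) (f' := fun a => -X a ω) (x := x) (fun a _ => by
          simpa using ((hasDerivAt_id x).mul_const (X a ω)).const_sub 1)
      refine this.congr_deriv (Finset.sum_congr rfl fun a _ => ?_)
      rw [smul_eq_mul]; ring
  have hbound : ∀ s ∈ Set.Icc (0 : ℝ) 1, |D s + lam * φ s| ≤ ε := by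
    intro s hs
    have hs2 : |s| ≤ 2 := by rw [abs_le]; constructor <;> linarith [hs.1, hs.2]
    have e : D s + lam * φ s = ∑ a, ((∫ ω, X a ω ∂P) * φ s -
        ∫ ω, X a ω * ∏ b ∈ Finset.univ.erase a, (1 - s * X b ω) ∂P) := by
      rw [Finset.sum_sub_distrib, ← Finset.sum_mul, hD]; ring
    rw [e]
    refine (Finset.abs_sum_le_sum_abs _ _).trans (Finset.sum_le_sum fun a _ => ?_)
    have pb : ∀ (A : Finset I) (ω : Ω), _ := fun A ω => prod_one_sub_bounds A
      (fun b => s * X b ω) (fun b => X b ω) (fun b => mul_nonneg hs.1 (hX0 b ω))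
      (fun b => mul_le_one₀ hs.2 (hX0 b ω) (hX1 b ω))
      (fun b => mul_le_of_le_one_left (hX0 b ω) hs.2)
    have e1 : ∀ ω, ∏ b ∈ Finset.univ.erase a, (1 - s * X b ω) =
        (∏ b ∈ (nb a)ᶜ, (1 - s * X b ω)) * ∏ b ∈ (nb a).erase a, (1 - s * X b ω) := fun ω => by
      rw [← Finset.prod_union]
      · congr 1; ext b; have := hself a
        simp only [Finset.mem_erase, Finset.mem_union, Finset.mem_compl, Finset.mem_univ]
        grind
      · rw [Finset.disjoint_left]; intro b; simp; tauto
    have e2 : ∀ ω, ∏ b, (1 - s * X b ω) =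
        (∏ b ∈ (nb a)ᶜ, (1 - s * X b ω)) * ∏ b ∈ nb a, (1 - s * X b ω) := fun ω => by
      rw [mul_comm, Finset.prod_mul_prod_compl]
    -- Dropping the neighbours of `a` from the product, on the event `X a = 1`.
    have b1 : ∫ ω, X a ω * ∏ b ∈ Finset.univ.erase a, (1 - s * X b ω) ∂P ≤
        ∫ ω, X a ω * ∏ b ∈ (nb a)ᶜ, (1 - s * X b ω) ∂P := by
      refine integral_mono (hXpint _ _ _ hs2) (hXpint _ _ _ hs2) fun ω => ?_
      refine mul_le_mul_of_nonneg_left ?_ (hX0 a ω)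
      rw [e1]
      exact mul_le_of_le_one_right (pb _ ω).1 (pb _ ω).2.1
    have b2 : (∫ ω, X a ω * ∏ b ∈ (nb a)ᶜ, (1 - s * X b ω) ∂P) -
        (∫ ω, X a ω * ∏ b ∈ Finset.univ.erase a, (1 - s * X b ω) ∂P) ≤
        ∑ b ∈ (nb a).erase a, ∫ ω, X a ω * X b ω ∂P := by
      rw [← integral_sub (hXpint _ _ _ hs2) (hXpint _ _ _ hs2),
        ← integral_finsetSum _ fun b _ => hXXint a b]
      refine integral_mono ((hXpint _ _ _ hs2).sub (hXpint _ _ _ hs2))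
        (integrable_finsetSum _ fun b _ => hXXint a b) fun ω => ?_
      simp only []
      rw [e1, ← mul_sub, ← Finset.mul_sum]
      refine mul_le_mul_of_nonneg_left ?_ (hX0 a ω)
      obtain ⟨q0, q1, q2⟩ := pb (nb a)ᶜ ω
      obtain ⟨r0, r1, r2⟩ := pb ((nb a).erase a) ω
      nlinarith
    have c1 : φ s ≤ ∫ ω, ∏ b ∈ (nb a)ᶜ, (1 - s * X b ω) ∂P := by
      refine integral_mono (hpint _ _ hs2) (hpint _ _ hs2) fun ω => ?_
      simp only []
      rw [e2]
      exact mul_le_of_le_one_right (pb _ ω).1 (pb _ ω).2.1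
    have c2 : (∫ ω, ∏ b ∈ (nb a)ᶜ, (1 - s * X b ω) ∂P) - φ s ≤
        ∑ b ∈ nb a, ∫ ω, X b ω ∂P := by
      rw [hφ]
      simp only []
      rw [← integral_sub (hpint _ _ hs2) (hpint _ _ hs2),
        ← integral_finsetSum _ fun b _ => hXint b]
      refine integral_mono ((hpint _ _ hs2).sub (hpint _ _ hs2))
        (integrable_finsetSum _ fun b _ => hXint b) fun ω => ?_
      simp only []
      rw [e2]
      obtain ⟨q0, q1, q2⟩ := pb (nb a)ᶜ ω
      obtain ⟨r0, r1, r2⟩ := pb (nb a) ω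
      nlinarith
    rw [hind a s] at b1 b2
    have c1' := mul_le_mul_of_nonneg_left c1 (hp0 a)
    have c2' := mul_le_mul_of_nonneg_left c2 (hp0 a)
    rw [mul_sub] at c2'
    have s1 : 0 ≤ ∑ b ∈ (nb a).erase a, ∫ ω, X a ω * X b ω ∂P := Finset.sum_nonneg fun b _ =>
      integral_nonneg fun ω => mul_nonneg (hX0 a ω) (hX0 b ω)
    have s2 : 0 ≤ (∫ ω, X a ω ∂P) * ∑ b ∈ nb a, ∫ ω, X b ω ∂P :=
      mul_nonneg (hp0 a) (Finset.sum_nonneg fun b _ => hp0 b)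
    rw [abs_le]; constructor <;> linarith
  -- The integrating factor `exp (lam * s)` turns the bound into one for `φ 1 - exp (-lam)`.
  have hmv := (convex_Icc (0 : ℝ) 1).norm_image_sub_le_of_norm_hasDerivWithin_le
    (f := fun s => Real.exp (lam * s) * φ s)
    (f' := fun s => Real.exp (lam * s) * (D s + lam * φ s)) (C := Real.exp lam * ε)
    (fun s hs => by
      have h1 : HasDerivAt (fun s => Real.exp (lam * s)) (Real.exp (lam * s) * lam) s := by
        simpa using ((hasDerivAt_id s).const_mul lam).exp
      refine ((h1.mul (hderiv s ?_)).congr_deriv (by ring)).hasDerivWithinAt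
      rw [abs_le]; constructor <;> linarith [hs.1, hs.2])
    (fun s hs => by
      rw [norm_mul, Real.norm_eq_abs, Real.norm_eq_abs, Real.abs_exp]
      refine mul_le_mul (Real.exp_le_exp.2 (mul_le_of_le_one_right hlam0 hs.2)) (hbound s hs)
        (abs_nonneg _) (Real.exp_pos _).le)
    (Set.left_mem_Icc.2 zero_le_one) (Set.right_mem_Icc.2 zero_le_one)
  have hφ0 : φ 0 = 1 := by simp [hφ]
  have hφ1 : φ 1 = ∫ ω, ∏ a, (1 - X a ω) ∂P := by simp [hφ]
  simp only [hφ0, mul_zero, Real.exp_zero, mul_one, sub_zero, norm_one, Real.norm_eq_abs] at hmv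
  rw [← hφ1]
  have e3 : Real.exp lam * φ 1 - 1 = Real.exp lam * (φ 1 - Real.exp (-lam)) := by
    rw [mul_sub, ← Real.exp_add]; simp
  rw [e3, abs_mul, Real.abs_exp] at hmv
  exact le_of_mul_le_mul_left hmv (Real.exp_pos _)

/-! ### Exceedance probabilities under a product measure -/

lemma measurePreserving_comp_inj (μ : Measure X) [IsProbabilityMeasure μ] {a b : ℕ}
    (e : Fin a → Fin b) (he : Function.Injective e) :
    MeasurePreserving (fun ξ : Fin b → X => ξ ∘ e) (Measure.pi fun _ => μ)
      (Measure.pi fun _ => μ) := by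
  refine ⟨by fun_prop, ?_⟩
  have h := (ProbabilityTheory.iIndepFun_pi (μ := fun _ : Fin b => μ)
    (X := fun _ => (id : X → X)) fun _ => aemeasurable_id).precomp he
  replace h := (ProbabilityTheory.iIndepFun_iff_map_fun_eq_pi_map
    (fun i => (measurable_id.comp (measurable_pi_apply (e i))).aemeasurable)).1 h
  refine h.trans ?_
  congr 1
  funext i
  exact (measurePreserving_eval (fun _ : Fin b => μ) (e i)).map_eq

lemma lintegral_update_pi (μ : Measure X) [IsProbabilityMeasure μ] {N : ℕ} (i : Fin N)
    (F : (Fin N → X) → ENNReal) (hF : Measurable F) :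
    ∫⁻ ξ, F ξ ∂(Measure.pi fun _ => μ) =
      ∫⁻ ξ, ∫⁻ x, F (Function.update ξ i x) ∂μ ∂(Measure.pi fun _ => μ) := by
  have hm : Measurable fun q : (Fin N → X) × X => Function.update q.1 i q.2 := by
    refine measurable_pi_lambda _ fun j => ?_
    by_cases h : j = i
    · subst h; simpa using measurable_snd
    · simp only [Function.update_of_ne h]; fun_prop
  have hmap : ((Measure.pi fun _ : Fin N => μ).prod μ).map
      (fun q : (Fin N → X) × X => Function.update q.1 i q.2) = Measure.pi fun _ => μ := by
    refine (Measure.pi_eq fun s hs => ?_).symm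
    rw [Measure.map_apply hm (MeasurableSet.univ_pi hs)]
    have : (fun q : (Fin N → X) × X => Function.update q.1 i q.2) ⁻¹' Set.univ.pi s =
        (Set.univ.pi (Function.update s i Set.univ)) ×ˢ s i := by
      ext q
      simp only [Set.mem_preimage, Set.mem_univ_pi, Set.mem_prod]
      constructor
      · intro h
        refine ⟨fun j => ?_, by simpa using h i⟩
        by_cases hj : j = i
        · subst hj; simp
        · simpa [hj] using h j
      · rintro ⟨h, h'⟩ j
        by_cases hj : j = i
        · subst hj; simpa using h'
        · simpa [hj] using h j
    rw [this, Measure.prod_prod, Measure.pi_pi, ← Finset.prod_erase_mul _ _ (Finset.mem_univ i),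
      ← Finset.prod_erase_mul _ (fun j => μ (s j)) (Finset.mem_univ i)]
    simp only [Function.update_self, measure_univ, mul_one]
    congr 1
    refine Finset.prod_congr rfl fun j hj => ?_
    rw [Function.update_of_ne (Finset.ne_of_mem_erase hj)]
  conv_lhs => rw [← hmap]
  rw [lintegral_map hF hm]
  exact lintegral_prod _ (hF.comp hm).aemeasurable

/-- The indicator of the exceedance event `f > z`. -/
def exceed {n : ℕ} (f : (Fin n → X) → ℝ) (z : ℝ) : (Fin n → X) → ENNReal :=
  {u | z < f u}.indicator fun _ => 1

lemma measurable_exceed {n : ℕ} {f : (Fin n → X) → ℝ} (hf : Measurable f) (z : ℝ) :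
    Measurable (exceed f z) :=
  measurable_const.indicator (measurableSet_lt measurable_const hf)

/-- The conditional exceedance probability `P[f(ξ, w) > z]` given the other coordinates `w`. -/
def condProb (μ : Measure X) {m : ℕ} (f : (Fin (m + 1) → X) → ℝ) (z : ℝ) (w : Fin m → X) :
    ENNReal :=
  μ {x : X | z < f (Fin.cons x w)}

/-- `E[condProb ^ 2]`: the probability that two `n`-tuples sharing all but one
coordinate both exceed the level. -/
def pairProb (μ : Measure X) {m : ℕ} (f : (Fin (m + 1) → X) → ℝ) (z : ℝ) : ENNReal :=
  ∫⁻ w, condProb μ f z w ^ 2 ∂(Measure.pi fun _ => μ)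

section kernel

variable (μ : Measure X) [IsProbabilityMeasure μ] {m : ℕ} (f : (Fin (m + 1) → X) → ℝ)
  (hf : Measurable f) (hsym : ∀ (u : Fin (m + 1) → X) (σ : Equiv.Perm (Fin (m + 1))),
    f (u ∘ σ) = f u) (z : ℝ)

omit [MeasurableSpace X] in
include hsym in
lemma apply_update_eq_cons (u : Fin (m + 1) → X) (k : Fin (m + 1)) (x : X) :
    f (Function.update u k x) = f (Fin.cons x (u ∘ k.succAbove)) := by
  rw [← hsym (Fin.cons x (u ∘ k.succAbove)) k.cycleRange]
  congr 1
  funext j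
  rcases Fin.eq_self_or_eq_succAbove k j with rfl | ⟨j, rfl⟩
  · simp
  · simp [Fin.cycleRange_succAbove]

include hf in
lemma measurable_condProb : Measurable (condProb μ f z) := by
  have h : MeasurableSet {q : (Fin m → X) × X | z < f (Fin.cons q.2 q.1)} := by
    refine measurableSet_lt measurable_const (hf.comp (measurable_pi_lambda _ fun j => ?_))
    refine Fin.cases ?_ (fun j => ?_) j
    · simpa using measurable_snd
    · simp only [Fin.cons_succ]; fun_prop
  exact measurable_measure_prodMk_left h

omit [IsProbabilityMeasure μ] in
include hf hsym in
lemma lintegral_update_ind {N : ℕ} (e : Fin (m + 1) → Fin N) (he : Function.Injective e)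
    (k : Fin (m + 1)) (ξ : Fin N → X) :
    ∫⁻ x, exceed f z (Function.update ξ (e k) x ∘ e) ∂μ =
      condProb μ f z (ξ ∘ e ∘ k.succAbove) := by
  have h : ∀ x, f (Function.update ξ (e k) x ∘ e) = f (Fin.cons x (ξ ∘ e ∘ k.succAbove)) := by
    intro x
    rw [Function.update_comp_eq_of_injective _ he, apply_update_eq_cons f hsym,
      Function.comp_assoc]
  have hm : MeasurableSet {x : X | z < f (Fin.cons x (ξ ∘ e ∘ k.succAbove))} := by
    refine measurableSet_lt measurable_const (hf.comp (measurable_pi_lambda _ fun j => ?_))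
    refine Fin.cases ?_ (fun j => ?_) j
    · simp only [Fin.cons_zero]; fun_prop
    · simp
  rw [condProb, ← lintegral_indicator_one hm]
  refine lintegral_congr fun x => ?_
  simp only [exceed, Set.indicator, Set.mem_ofPred_eq, h, Pi.one_apply]

include hf hsym in
lemma measure_exceed {N : ℕ} (e : Fin (m + 1) → Fin N) (he : Function.Injective e) :
    ∫⁻ ξ, exceed f z (ξ ∘ e) ∂(Measure.pi fun _ => μ) =
      ∫⁻ ξ, condProb μ f z ξ ∂(Measure.pi fun _ => μ) := by
  have hi : Measurable fun ξ : Fin N → X => exceed f z (ξ ∘ e) :=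
    (measurable_exceed hf z).comp (by fun_prop)
  rw [lintegral_update_pi μ (e 0) _ hi]
  simp_rw [lintegral_update_ind μ f hf hsym z e he 0]
  exact (measurePreserving_comp_inj μ (e ∘ Fin.succAbove 0)
    (he.comp Fin.succAbove_right_injective)).lintegral_comp (measurable_condProb μ f hf z)

/-- Resampling a private coordinate of each tuple decouples the two exceedance events. -/
lemma measure_exceed_pair (hf : Measurable f)
    (hsym : ∀ (u : Fin (m + 1) → X) (σ : Equiv.Perm (Fin (m + 1))), f (u ∘ σ) = f u)
    {N : ℕ} (e e' : Fin (m + 1) → Fin N)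
    (he : Function.Injective e) (he' : Function.Injective e') (k k' : Fin (m + 1))
    (hk : ∀ j, e' j ≠ e k) (hk' : ∀ j, e j ≠ e' k') :
    ∫⁻ ξ, exceed f z (ξ ∘ e) *
        exceed f z (ξ ∘ e') ∂(Measure.pi fun _ => μ) =
      ∫⁻ ξ, condProb μ f z (ξ ∘ e ∘ k.succAbove) * condProb μ f z (ξ ∘ e' ∘ k'.succAbove)
        ∂(Measure.pi fun _ => μ) := by
  have hi' : ∀ g : Fin (m + 1) → Fin N, Measurable fun ξ : Fin N → X => exceed f z (ξ ∘ g) :=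
    fun g => (measurable_exceed hf z).comp (by fun_prop)
  have hi : ∀ g : Fin (m + 1) → Fin N, ∀ ξ : Fin N → X, ∀ i,
      Measurable fun x => exceed f z (Function.update ξ i x ∘ g) :=
    fun g ξ i => (hi' g).comp (measurable_update ξ)
  have hc := measurable_condProb μ f hf z
  have hc' : ∀ g : Fin m → Fin N, Measurable fun ξ : Fin N → X => condProb μ f z (ξ ∘ g) :=
    fun g => hc.comp (by fun_prop)
  rw [lintegral_update_pi μ (e k) (fun ξ => exceed f z (ξ ∘ e) * exceed f z (ξ ∘ e'))
    ((hi' e).mul (hi' e'))]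
  have h1 : ∀ (ξ : Fin N → X) x, Function.update ξ (e k) x ∘ e' = ξ ∘ e' := fun ξ x => by
    funext j; simp [hk j]
  have h2 : ∀ (ξ : Fin N → X) x, Function.update ξ (e' k') x ∘ e ∘ k.succAbove =
      ξ ∘ e ∘ k.succAbove := fun ξ x => by
    funext j; simp [hk' (k.succAbove j)]
  have h3 : ∀ (ξ : Fin N → X), ∫⁻ x,
      exceed f z (Function.update ξ (e k) x ∘ e) *
        exceed f z (Function.update ξ (e k) x ∘ e') ∂μ =
      condProb μ f z (ξ ∘ e ∘ k.succAbove) *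
        exceed f z (ξ ∘ e') := fun ξ => by
    simp_rw [h1]
    rw [lintegral_mul_const _ (hi _ _ _), lintegral_update_ind μ f hf hsym z e he]
  simp_rw [h3]
  rw [lintegral_update_pi μ (e' k')
    (fun ξ => condProb μ f z (ξ ∘ e ∘ k.succAbove) * exceed f z (ξ ∘ e')) ((hc' (e ∘ k.succAbove)).mul (hi' e'))]
  refine lintegral_congr fun ξ => ?_
  simp_rw [h2]
  rw [lintegral_const_mul _ (hi _ _ _), lintegral_update_ind μ f hf hsym z e' he']

lemma ennreal_mul_le_sq_add_sq (a b : ENNReal) : a * b ≤ a ^ 2 + b ^ 2 := by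
  rcases le_total a b with h | h
  · exact (mul_le_mul_left h b).trans ((sq b).symm.le.trans le_add_self)
  · exact (mul_le_mul_right h a).trans ((sq a).symm.le.trans le_self_add)

lemma measure_exceed_pair_le (hf : Measurable f)
    (hsym : ∀ (u : Fin (m + 1) → X) (σ : Equiv.Perm (Fin (m + 1))), f (u ∘ σ) = f u)
    {N : ℕ} (e e' : Fin (m + 1) → Fin N)
    (he : Function.Injective e) (he' : Function.Injective e') (k k' : Fin (m + 1))
    (hk : ∀ j, e' j ≠ e k) (hk' : ∀ j, e j ≠ e' k') :
    ∫⁻ ξ, exceed f z (ξ ∘ e) *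
        exceed f z (ξ ∘ e') ∂(Measure.pi fun _ => μ) ≤
      2 * pairProb μ f z := by
  rw [measure_exceed_pair μ f z hf hsym e e' he he' k k' hk hk']
  have hc := measurable_condProb μ f hf z
  refine (lintegral_mono fun ξ => ennreal_mul_le_sq_add_sq _ _).trans ?_
  have hc' : Measurable fun ξ : Fin N → X => condProb μ f z (ξ ∘ e ∘ k.succAbove) :=
    hc.comp (by fun_prop)
  rw [lintegral_add_left (hc'.pow_const 2), two_mul]
  refine add_le_add (le_of_eq ?_) (le_of_eq ?_)
  · exact (measurePreserving_comp_inj μ (e ∘ k.succAbove)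
      (he.comp Fin.succAbove_right_injective)).lintegral_comp (hc.pow_const 2)
  · exact (measurePreserving_comp_inj μ (e' ∘ k'.succAbove)
      (he'.comp Fin.succAbove_right_injective)).lintegral_comp (hc.pow_const 2)

include hf in
lemma sq_lintegral_condProb_le :
    (∫⁻ w, condProb μ f z w ∂(Measure.pi fun _ => μ)) ^ 2 ≤ 2 * pairProb μ f z := by
  have hc := measurable_condProb μ f hf z
  have h : (∫⁻ w, condProb μ f z w ∂(Measure.pi fun _ => μ)) ^ 2 =
      ∫⁻ w, ∫⁻ w', condProb μ f z w * condProb μ f z w' ∂(Measure.pi fun _ => μ)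
        ∂(Measure.pi fun _ => μ) := by
    simp_rw [lintegral_const_mul _ hc]
    rw [lintegral_mul_const _ hc, sq]
  rw [h]
  refine (lintegral_mono fun w => lintegral_mono fun w' =>
    ennreal_mul_le_sq_add_sq _ _).trans (le_of_eq ?_)
  simp_rw [lintegral_add_left measurable_const]
  simp only [lintegral_const, measure_univ, mul_one]
  rw [lintegral_add_right _ measurable_const]
  simp [pairProb, two_mul]

end kernel

/-! ### Counting overlapping index tuples -/

lemma pairProb_ne_top (μ : Measure X) [IsProbabilityMeasure μ] {m : ℕ}
    (f : (Fin (m + 1) → X) → ℝ) (z : ℝ) : pairProb μ f z ≠ ⊤ := by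
  refine ne_top_of_le_ne_top ENNReal.one_ne_top
    ((lintegral_mono (g := fun _ => 1) fun w => ?_).trans (by simp))
  exact pow_le_one₀ zero_le prob_le_one

section count

variable {m N : ℕ}

lemma card_orderEmb (n N : ℕ) : Fintype.card (Fin n ↪o Fin N) = N.choose n := by
  rw [← Finset.card_univ]
  conv_rhs => rw [← Fintype.card_fin N, ← Finset.card_univ, ← Finset.card_powersetCard]
  refine Finset.card_bij (fun a _ => Finset.univ.map a.toEmbedding) ?_ ?_ ?_
  · intro a _; simp [Finset.mem_powersetCard]
  · intro a _ b _ h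
    refine DFunLike.coe_injective ((a.strictMono.range_inj b.strictMono).1 ?_)
    have := congrArg (fun s : Finset (Fin N) => (s : Set (Fin N))) h
    simpa using this
  · intro s hs
    rw [Finset.mem_powersetCard] at hs
    exact ⟨s.orderEmbOfFin hs.2, Finset.mem_univ _, Finset.map_orderEmbOfFin_univ s hs.2⟩

open scoped Classical in
/-- The index tuples sharing at least one entry with `a`. -/
def nbr (a : Fin (m + 1) ↪o Fin N) : Finset (Fin (m + 1) ↪o Fin N) :=
  Finset.univ.filter fun b => ∃ k k', a k = b k'

lemma card_nbr_le (a : Fin (m + 1) ↪o Fin N) : (nbr a).card ≤ (m + 1) ^ 2 * N ^ m := by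
  classical
  have hsub : nbr a ⊆ (Finset.univ : Finset (Fin (m + 1) × Fin (m + 1))).biUnion fun q =>
      Finset.univ.filter fun b => a q.1 = b q.2 := by
    intro b hb
    simp only [nbr, Finset.mem_filter, Finset.mem_univ, true_and] at hb
    obtain ⟨k, k', h⟩ := hb
    simp only [Finset.mem_biUnion, Finset.mem_filter, Finset.mem_univ, true_and]
    exact ⟨(k, k'), h⟩
  refine (Finset.card_le_card hsub).trans
    ((Finset.card_biUnion_le_card_mul _ _ (N ^ m) fun q _ => ?_).trans ?_)
  · have : (Finset.univ : Finset (Fin m → Fin N)).card = N ^ m := by simp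
    rw [← this]
    refine Finset.card_le_card_of_injOn (fun b => b ∘ q.2.succAbove)
      (fun _ _ => Finset.mem_coe.2 (Finset.mem_univ _)) ?_
    intro b hb b' hb' h
    simp only [Finset.coe_filter, Finset.mem_univ, true_and] at hb hb'
    have hb : a q.1 = b q.2 := hb
    have hb' : a q.1 = b' q.2 := hb'
    refine DFunLike.ext _ _ fun j => ?_
    rcases Fin.eq_self_or_eq_succAbove q.2 j with rfl | ⟨j, rfl⟩
    · rw [← hb, ← hb']
    · exact congrFun h j
  · simp [sq]

lemma exists_private {a b : Fin (m + 1) ↪o Fin N} (hab : a ≠ b) : ∃ k, ∀ j, b j ≠ a k := by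
  classical
  by_contra! h
  have hsub : Finset.univ.map a.toEmbedding ⊆ Finset.univ.map b.toEmbedding := by
    intro x hx
    simp only [Finset.mem_map, Finset.mem_univ, true_and] at hx ⊢
    obtain ⟨k, rfl⟩ := hx
    exact h k
  have heq := Finset.eq_of_subset_of_card_le hsub (by simp)
  refine hab (DFunLike.coe_injective ((a.strictMono.range_inj b.strictMono).1 ?_))
  have := congrArg (fun s : Finset (Fin N) => (s : Set (Fin N))) heq
  simpa using this

end count

section main

variable (μ : Measure X) [IsProbabilityMeasure μ] {m : ℕ} (f : (Fin (m + 1) → X) → ℝ)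
  (hf : Measurable f) (hsym : ∀ (u : Fin (m + 1) → X) (σ : Equiv.Perm (Fin (m + 1))),
    f (u ∘ σ) = f u) (z : ℝ)

include hf hsym in
lemma pProb_eq :
    pProb μ (m + 1) f z = (∫⁻ w, condProb μ f z w ∂(Measure.pi fun _ => μ)).toReal := by
  have h := measure_exceed μ f hf hsym z (N := m + 1) id Function.injective_id
  rw [pProb, ← h]
  congr 1
  exact (lintegral_indicator_one (measurableSet_lt measurable_const hf)).symm

include hf hsym in
lemma tauProb_mul_pProb (hp : pProb μ (m + 1) f z ≠ 0) :
    pProb μ (m + 1) f z * tauProb μ (m + 1) f z m = (pairProb μ f z).toReal := by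
  rw [tauProb, mul_div_cancel₀ _ hp]
  congr 1
  let e : Fin (m + 1) → Fin (2 * (m + 1)) := fun i => ⟨i, by have := i.2; omega⟩
  let e' : Fin (m + 1) → Fin (2 * (m + 1)) :=
    fun i => ⟨m + 1 - m + (i : ℕ), by have := i.2; omega⟩
  have he : Function.Injective e := fun i j h => by
    simp only [e, Fin.mk.injEq] at h; exact Fin.ext h
  have he' : Function.Injective e' := fun i j h => by
    simp only [e', Fin.mk.injEq] at h; exact Fin.ext (by omega)
  have key := measure_exceed_pair μ f z hf hsym e e' he he' 0 (Fin.last m)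
    (fun j => by simp only [e, e', ne_eq, Fin.mk.injEq, Fin.val_zero]; omega)
    (fun j => by have := j.2; simp only [e, e', ne_eq, Fin.mk.injEq, Fin.val_last]; omega)
  have hee : e' ∘ (Fin.last m).succAbove = e ∘ Fin.succAbove 0 := by
    funext j
    simp only [Function.comp_apply, Fin.succAbove_last, Fin.succAbove_zero, e, e', Fin.mk.injEq,
      Fin.val_castSucc, Fin.val_succ]
    omega
  rw [hee] at key
  have hq := (measurePreserving_comp_inj μ (e ∘ Fin.succAbove 0)
      (he.comp Fin.succAbove_right_injective)).lintegral_comp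
      ((measurable_condProb μ f hf z).pow_const 2)
  simp_rw [← sq] at key
  rw [pairProb, ← hq, ← key]
  have hm : MeasurableSet {u : Fin (2 * (m + 1)) → X | z < f (u ∘ e) ∧ z < f (u ∘ e')} :=
    (measurableSet_lt measurable_const (hf.comp (by fun_prop))).inter
      (measurableSet_lt measurable_const (hf.comp (by fun_prop)))
  refine (lintegral_indicator_one hm).symm.trans (lintegral_congr fun ξ => ?_)
  by_cases h1 : z < f (ξ ∘ e) <;> by_cases h2 : z < f (ξ ∘ e') <;>
    simp [exceed, Set.indicator, h1, h2]

include hf in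
lemma integral_prod_eq_maxCDF (N : ℕ) :
    ∫ ξ, ∏ a : Fin (m + 1) ↪o Fin N, (1 - (exceed f z (ξ ∘ a)).toReal)
      ∂(Measure.pi fun _ => μ) = maxCDF μ (m + 1) f N z := by
  have hset : {ξ : Fin N → X | ∀ ι : Fin (m + 1) → Fin N, StrictMono ι → f (ξ ∘ ι) ≤ z} =
      ⋂ a : Fin (m + 1) ↪o Fin N, {ξ : Fin N → X | f (ξ ∘ a) ≤ z} := by
    ext ξ
    simp only [Set.mem_iInter, Set.mem_ofPred_eq]
    exact ⟨fun h a => h a a.strictMono, fun h ι hι => h (OrderEmbedding.ofStrictMono ι hι)⟩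
  have hm : MeasurableSet
      {ξ : Fin N → X | ∀ ι : Fin (m + 1) → Fin N, StrictMono ι → f (ξ ∘ ι) ≤ z} := by
    rw [hset]
    exact MeasurableSet.iInter fun a => measurableSet_le (hf.comp (by fun_prop)) measurable_const
  rw [maxCDF]
  refine Eq.trans (integral_congr_ae (ae_of_all _ fun ξ => ?_)) (integral_indicator_one hm)
  by_cases h : ∀ ι : Fin (m + 1) → Fin N, StrictMono ι → f (ξ ∘ ι) ≤ z
  · rw [Set.indicator_of_mem (by exact h)]
    refine Finset.prod_eq_one fun a _ => ?_
    simp [exceed, Set.indicator, not_lt.2 (h a a.strictMono)]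
  · rw [Set.indicator_of_notMem (by exact h)]
    push Not at h
    obtain ⟨ι, hι, hz⟩ := h
    refine Finset.prod_eq_zero (Finset.mem_univ (OrderEmbedding.ofStrictMono ι hι)) ?_
    simp [exceed, Set.indicator, hz]

include hf in
/-- Functions of disjoint blocks of coordinates are uncorrelated. -/
lemma integral_nbr_indep {N : ℕ} (a : Fin (m + 1) ↪o Fin N) (s : ℝ) :
    ∫ ξ, (exceed f z (ξ ∘ a)).toReal * ∏ b ∈ (nbr a)ᶜ, (1 - s * (exceed f z (ξ ∘ b)).toReal)
      ∂(Measure.pi fun _ => μ) =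
    (∫ ξ, (exceed f z (ξ ∘ a)).toReal ∂(Measure.pi fun _ => μ)) *
      ∫ ξ, ∏ b ∈ (nbr a)ᶜ, (1 - s * (exceed f z (ξ ∘ b)).toReal) ∂(Measure.pi fun _ => μ) := by
  classical
  have hx : Measurable fun u => (exceed f z u).toReal := (measurable_exceed hf z).ennreal_toReal
  let S : Finset (Fin N) := Finset.univ.map a.toEmbedding
  have hS : ∀ k, a k ∈ S := fun k => Finset.mem_map_of_mem _ (Finset.mem_univ k)
  have hT : ∀ b ∈ (nbr a)ᶜ, ∀ k, b k ∈ Sᶜ := by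
    intro b hb k
    rw [Finset.mem_compl]
    intro hk
    simp only [nbr, Finset.mem_compl, Finset.mem_filter, Finset.mem_univ, true_and,
      not_exists] at hb
    simp only [S, Finset.mem_map, Finset.mem_univ, true_and] at hk
    obtain ⟨j, hj⟩ := hk
    exact hb j k hj
  have hind := (ProbabilityTheory.iIndepFun_pi (μ := fun _ : Fin N => μ)
    (X := fun _ => (id : X → X)) fun _ => aemeasurable_id).indepFun_finset S Sᶜ
      disjoint_compl_right (fun i => measurable_id.comp (measurable_pi_apply i))
  let A : (S → X) → ℝ := fun u => (exceed f z fun k => u ⟨a k, hS k⟩).toReal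
  let B : ((Sᶜ : Finset (Fin N)) → X) → ℝ := fun u => ∏ b : ((nbr a)ᶜ : Finset _),
    (1 - s * (exceed f z fun k => u ⟨b.1 k, hT b.1 b.2 k⟩).toReal)
  have hA : Measurable A := hx.comp (by fun_prop)
  have hB : Measurable B := Finset.measurable_fun_prod _ fun b _ =>
    measurable_const.sub ((hx.comp (by fun_prop)).const_mul s)
  have hBeq : ∀ ξ : Fin N → X, B (fun i => ξ i) =
      ∏ b ∈ (nbr a)ᶜ, (1 - s * (exceed f z (ξ ∘ b)).toReal) := fun ξ =>
    Finset.prod_coe_sort ((nbr a)ᶜ) fun b => (1 - s * (exceed f z (ξ ∘ b)).toReal)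
  have h := (hind.comp hA hB).integral_fun_mul_eq_mul_integral
    (hA.comp (by fun_prop)).aestronglyMeasurable (hB.comp (by fun_prop)).aestronglyMeasurable
  simp_rw [← hBeq]
  exact h

include hf hsym in
/-- Each of the at most `N ^ (m + 1) * ((m + 1) ^ 2 * N ^ m)` overlapping pairs of index tuples
contributes at most `4 * pairProb` to the Poisson approximation error. -/
lemma maxCDF_error (N : ℕ) :
    |maxCDF μ (m + 1) f N z - Real.exp (-((N.choose (m + 1) : ℝ) * pProb μ (m + 1) f z))| ≤
      4 * (m + 1) ^ 2 * ((N : ℝ) ^ (2 * m + 1) * (pairProb μ f z).toReal) := by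
  classical
  set Q := (pairProb μ f z).toReal with hQ
  set p := pProb μ (m + 1) f z with hp
  have hQ0 : 0 ≤ Q := ENNReal.toReal_nonneg
  have hx := measurable_exceed hf z
  have hxm : ∀ a : Fin (m + 1) ↪o Fin N, Measurable fun ξ : Fin N → X => exceed f z (ξ ∘ a) :=
    fun a => hx.comp (by fun_prop)
  have hx01 : ∀ u, exceed f z u = 0 ∨ exceed f z u = 1 := fun u => by
    by_cases h : z < f u <;> simp [exceed, Set.indicator, h]
  have hfin : ∀ u, exceed f z u < ⊤ := fun u => by rcases hx01 u with h | h <;> simp [h]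
  have hEp : ∀ a : Fin (m + 1) ↪o Fin N,
      ∫ ξ, (exceed f z (ξ ∘ a)).toReal ∂(Measure.pi fun _ => μ) = p := fun a => by
    rw [integral_toReal (hxm a).aemeasurable (ae_of_all _ fun ξ => hfin _), hp,
      pProb_eq μ f hf hsym, measure_exceed μ f hf hsym z a a.injective]
  have hp2 : p * p ≤ 2 * Q := by
    rw [hp, pProb_eq μ f hf hsym, ← sq, ← ENNReal.toReal_pow, hQ,
      show (2 : ℝ) = (2 : ENNReal).toReal by simp, ← ENNReal.toReal_mul]
    exact ENNReal.toReal_mono (ENNReal.mul_ne_top (by simp) (pairProb_ne_top μ f z))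
      (sq_lintegral_condProb_le μ f hf z)
  have hpair : ∀ a b : Fin (m + 1) ↪o Fin N, a ≠ b →
      ∫ ξ, (exceed f z (ξ ∘ a)).toReal * (exceed f z (ξ ∘ b)).toReal
        ∂(Measure.pi fun _ => μ) ≤ 2 * Q := fun a b hab => by
    simp_rw [← ENNReal.toReal_mul]
    rw [integral_toReal (f := fun ξ : Fin N → X => exceed f z (ξ ∘ a) * exceed f z (ξ ∘ b))
      ((hxm a).mul (hxm b)).aemeasurable
      (ae_of_all _ fun ξ => ENNReal.mul_lt_top (hfin _) (hfin _)), hQ,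
      show (2 : ℝ) = (2 : ENNReal).toReal by simp, ← ENNReal.toReal_mul]
    obtain ⟨k, hk⟩ := exists_private hab
    obtain ⟨k', hk'⟩ := exists_private hab.symm
    exact ENNReal.toReal_mono (ENNReal.mul_ne_top (by simp) (pairProb_ne_top μ f z))
      (measure_exceed_pair_le μ f z hf hsym a b a.injective b.injective k k' hk hk')
  have key := void_approx (Measure.pi fun _ : Fin N => μ)
    (fun (a : Fin (m + 1) ↪o Fin N) ξ => (exceed f z (ξ ∘ a)).toReal)
    (fun a => (hxm a).ennreal_toReal)
    (fun a ξ => by rcases hx01 (ξ ∘ a) with h | h <;> simp [h]) nbr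
    (fun a => by simp [nbr]) (fun a s => integral_nbr_indep μ f hf z a s)
  rw [integral_prod_eq_maxCDF μ f hf z N] at key
  simp only [hEp, Finset.sum_const, Finset.card_univ, card_orderEmb, nsmul_eq_mul] at key
  refine key.trans ?_
  have hterm : ∀ a : Fin (m + 1) ↪o Fin N,
      (∑ b ∈ (nbr a).erase a, ∫ ξ, (exceed f z (ξ ∘ a)).toReal * (exceed f z (ξ ∘ b)).toReal
        ∂(Measure.pi fun _ => μ)) + p * ((nbr a).card * p) ≤
      4 * ((m + 1) ^ 2 * (N : ℝ) ^ m) * Q := fun a => by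
    have hc : ((nbr a).card : ℝ) ≤ (m + 1) ^ 2 * (N : ℝ) ^ m := by
      exact_mod_cast card_nbr_le a
    have h1 : (∑ b ∈ (nbr a).erase a, ∫ ξ, (exceed f z (ξ ∘ a)).toReal *
        (exceed f z (ξ ∘ b)).toReal ∂(Measure.pi fun _ => μ)) ≤ (nbr a).card * (2 * Q) := by
      refine (Finset.sum_le_card_nsmul _ _ (2 * Q) fun b hb =>
        hpair a b (Finset.ne_of_mem_erase hb).symm).trans ?_
      rw [nsmul_eq_mul]
      refine mul_le_mul_of_nonneg_right ?_ (by linarith)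
      exact_mod_cast Finset.card_le_card (Finset.erase_subset _ _)
    have h2 : p * ((nbr a).card * p) ≤ (nbr a).card * (2 * Q) := by
      rw [mul_left_comm]
      exact mul_le_mul_of_nonneg_left hp2 (Nat.cast_nonneg _)
    have h3 := mul_le_mul_of_nonneg_right hc hQ0
    linarith
  refine (Finset.sum_le_sum fun a _ => hterm a).trans ?_
  rw [Finset.sum_const, Finset.card_univ, card_orderEmb, nsmul_eq_mul]
  have hch : (N.choose (m + 1) : ℝ) ≤ (N : ℝ) ^ (m + 1) := by
    exact_mod_cast Nat.choose_le_pow N (m + 1)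
  refine (mul_le_mul_of_nonneg_right hch (by positivity)).trans (le_of_eq ?_)
  ring

end main

/-- Theorem 4 (Silverman–Brown): if `λ_{N,z_N(t)} → λ_t > 0` and
`N^{2n−1} p_{N,z_N(t)} τ_{N,z_N(t)}(n−1) → 0` for each `t ∈ T`, then
`P[H_N ≤ z_N(t)] → e^{−λ_t}` for each `t ∈ T`. -/
theorem stmt5 (μ : Measure X) [IsProbabilityMeasure μ] (n : ℕ)
    (f : (Fin n → X) → ℝ) (hf : Measurable f)
    (hsym : ∀ (u : Fin n → X) (σ : Equiv.Perm (Fin n)), f (u ∘ σ) = f u)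
    (T : Set ℝ) (z : ℕ → ℝ → ℝ) (lam : ℝ → ℝ)
    (hpos : ∀ t ∈ T, 0 < lam t)
    (h1 : ∀ t ∈ T,
      Filter.Tendsto (fun N : ℕ => (N.choose n : ℝ) * pProb μ n f (z N t))
        atTop (𝓝 (lam t)))
    (h2 : ∀ t ∈ T,
      Filter.Tendsto
        (fun N : ℕ => (N : ℝ) ^ (2 * n - 1) * pProb μ n f (z N t) *
          tauProb μ n f (z N t) (n - 1))
        atTop (𝓝 0)) :
    ∀ t ∈ T,
      Filter.Tendsto (fun N : ℕ => maxCDF μ n f N (z N t)) atTop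
        (𝓝 (Real.exp (-lam t))) := by
  intro t ht
  cases n with
  | zero =>
    -- For `n = 0` the hypotheses conflict: the level is exceeded with probability `0` or `1`,
    -- so `h1` makes this probability eventually `1`, and then `h2` says that `1` tends to `0`.
    exfalso
    have hp := (h1 t ht).eventually (lt_mem_nhds (hpos t ht))
    refine zero_ne_one (tendsto_nhds_unique (h2 t ht)
      (tendsto_const_nhds.congr' (hp.mono fun N hN => ?_)))
    have hz : z N t < f default := by
      by_contra h
      have : {u : Fin 0 → X | z N t < f u} = ∅ := by
        ext u; simpa [Subsingleton.elim u default] using h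
      simp [pProb, this] at hN
    have hz' : ∀ u, z N t < f u := fun u => by rwa [Subsingleton.elim u default]
    simp [pProb, tauProb, hz']
  | succ m =>
    have hp := (h1 t ht).eventually (lt_mem_nhds (hpos t ht))
    have h2' : Tendsto (fun N : ℕ => 4 * ((m : ℝ) + 1) ^ 2 *
        ((N : ℝ) ^ (2 * m + 1) * (pairProb μ f (z N t)).toReal)) atTop (𝓝 0) := by
      have h := (h2 t ht).const_mul (4 * ((m : ℝ) + 1) ^ 2)
      rw [mul_zero] at h
      refine h.congr' (hp.mono fun N hN => ?_)
      have hp0 : pProb μ (m + 1) f (z N t) ≠ 0 := fun h0 => by simp [h0] at hN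
      have hτ := tauProb_mul_pProb μ f hf hsym (z N t) hp0
      simp only [← hτ, ← mul_assoc]
      rfl
    have hexp : Tendsto (fun N : ℕ =>
        Real.exp (-((N.choose (m + 1) : ℝ) * pProb μ (m + 1) f (z N t)))) atTop
        (𝓝 (Real.exp (-lam t))) :=
      (Real.continuous_exp.tendsto _).comp (h1 t ht).neg
    have hdiff := squeeze_zero_norm (f := fun N => maxCDF μ (m + 1) f N (z N t) -
      Real.exp (-((N.choose (m + 1) : ℝ) * pProb μ (m + 1) f (z N t)))) (fun N => maxCDF_error μ f hf hsym (z N t) N) h2'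
    simpa using hdiff.add hexp
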